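/- Let q be an odd prime power and let n be a positive integer coprime to q, written n = 2^m · n' with n' odd and m ≥ 0. Let r be the positive integer such that 2^r exactly divides q + 1 (i.e., 2^r | q+1 and 2^{r+1} ∤ q+1). Then the number of SCRIM factors of x^n − 1 over F_{q^2} satisfies |Ω_{q^2,n}| = 2^m · |Ω_{q^2,n'}| if 0 ≤ m ≤ r, and |Ω_{q^2,n}| = 2^r · |Ω_{q^2,n'}| if m > r. In particular, if n' = 1 then |Ω_{q^2,n'}| = 1, so |Ω_{q^2,2^m}| = 2^m if 0 ≤ m ≤ r and |Ω_{q^2,2^m}| = 2^r if m > r. -/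

import Mathlib

open Polynomial

/-- The reciprocal polynomial `f*(x) = x^(deg f) * f(0)⁻¹ * f(1/x)`. -/
noncomputable def crecip {F : Type*} [Field F] (f : F[X]) : F[X] :=
  C (f.coeff 0)⁻¹ * f.reverse

/-- The conjugate-reciprocal polynomial `f†`, obtained by applying the
conjugation `a ↦ a ^ q` to each coefficient of `f*`. -/
noncomputable def cdagger {F : Type*} [Field F] (q : ℕ) (f : F[X]) : F[X] :=
  (crecip f).sum fun i a => C (a ^ q) * X ^ i

/-- A polynomial is SCRIM if it is monic, irreducible, and self-conjugate-reciprocal. -/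
def IsSCRIM {F : Type*} [Field F] (q : ℕ) (f : F[X]) : Prop :=
  f.Monic ∧ Irreducible f ∧ f = cdagger q f

/-- The set `Ω_{q²,n}` of SCRIM factors of `x^n - 1` over `F = F_{q²}`. -/
def scrimFactors (F : Type*) [Field F] (q n : ℕ) : Set F[X] :=
  {f | IsSCRIM q f ∧ f ∣ X ^ n - 1}


/-- `α` satisfies `α ^ (q ^ k + 1) = 1` for some odd `k`. -/
def ScGood {K : Type*} [Field K] (q : ℕ) (α : K) : Prop := ∃ k, Odd k ∧ α ^ (q ^ k + 1) = 1

lemma cdagger_eq_map {F : Type*} [Field F] {q : ℕ} (σ : F →+* F) (hσ : ∀ a, σ a = a ^ q)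
    (f : F[X]) : cdagger q f = (crecip f).map σ := by
  unfold cdagger
  rw [Polynomial.map, eval₂_eq_sum]
  simp [hσ]

lemma cdagger_monic {F : Type*} [Field F] {q : ℕ} (σ : F →+* F) (hσ : ∀ a, σ a = a ^ q)
    (f : F[X]) (h0 : f.coeff 0 ≠ 0) : (cdagger q f).Monic := by
  rw [cdagger_eq_map σ hσ]
  apply Monic.map
  unfold crecip Monic
  rw [leadingCoeff_mul, leadingCoeff_C, reverse_leadingCoeff, trailingCoeff,
    natTrailingDegree_eq_zero.2 (Or.inr h0)]
  exact inv_mul_cancel₀ h0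

lemma cdagger_natDegree {F : Type*} [Field F] {q : ℕ} (σ : F →+* F) (hσ : ∀ a, σ a = a ^ q)
    (f : F[X]) (h0 : f.coeff 0 ≠ 0) : (cdagger q f).natDegree = f.natDegree := by
  rw [cdagger_eq_map σ hσ, natDegree_map]
  unfold crecip
  rw [natDegree_C_mul (inv_ne_zero h0), reverse_natDegree,
    natTrailingDegree_eq_zero.2 (Or.inr h0)]
  rfl

lemma aeval_cdagger {F K : Type*} [Field F] [Field K] [Algebra F K] {q : ℕ} (σ : F →+* F)
    (hσ : ∀ a, σ a = a ^ q) (τ : K →+* K) (hτ : ∀ a, τ a = a ^ q)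
    (f : F[X]) (α : K) (h : α ≠ 0) (hf : aeval α f = 0) :
    aeval ((α⁻¹) ^ q) (cdagger q f) = 0 := by
  rw [cdagger_eq_map σ hσ, aeval_def, eval₂_map, ← hτ]
  have hc : (algebraMap F K).comp σ = τ.comp (algebraMap F K) := by
    ext a; simp [hσ, hτ]
  rw [hc, ← hom_eval₂]
  have : eval₂ (algebraMap F K) α⁻¹ (crecip f) = 0 := by
    unfold crecip
    rw [eval₂_mul]
    let _ := invertibleOfNonzero h
    have h2 := (eval₂_reverse_eq_zero_iff (algebraMap F K) α f).2 hf
    rw [invOf_eq_inv] at h2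
    rw [h2, mul_zero]
  rw [this, map_zero]

lemma scrim_minpoly_iff {F K : Type*} [Field F] [Fintype F] [Field K] [Finite K] [Algebra F K]
    {q : ℕ} (hF : Fintype.card F = q ^ 2) (σ : F →+* F)
    (hσ : ∀ a, σ a = a ^ q) (τ : K →+* K) (hτ : ∀ a, τ a = a ^ q) (α : K) (h : α ≠ 0) :
    IsSCRIM q (minpoly F α) ↔ ScGood q α := by
  have hint : IsIntegral F α := Algebra.IsIntegral.isIntegral α
  have h0 : (minpoly F α).coeff 0 ≠ 0 := minpoly.coeff_zero_ne_zero hint h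
  have key : IsSCRIM q (minpoly F α) ↔ aeval ((α⁻¹) ^ q) (minpoly F α) = 0 := by
    have hd := aeval_cdagger σ hσ τ hτ _ α h (minpoly.aeval F α)
    constructor
    · rintro ⟨_, _, h3⟩
      rw [h3]; exact hd
    · intro hz
      refine ⟨minpoly.monic hint, minpoly.irreducible hint, ?_⟩
      have e : minpoly F α = minpoly F ((α⁻¹) ^ q) :=
        minpoly.eq_of_irreducible_of_monic (minpoly.irreducible hint) hz (minpoly.monic hint)
      symm
      refine eq_of_monic_of_dvd_of_natDegree_le (minpoly.monic hint) (cdagger_monic σ hσ _ h0) ?_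
        (cdagger_natDegree σ hσ _ h0).le
      conv_lhs => rw [e]
      exact minpoly.dvd F _ hd
  rw [key]
  constructor
  · intro hz
    obtain ⟨g, hg⟩ := minpoly.exists_algEquiv_of_root' hint.isAlgebraic hz
    obtain ⟨⟨i, _⟩, hi⟩ := (FiniteField.bijective_frobeniusAlgEquivOfAlgebraic_pow F K).2 g
    have hi2 : α ^ ((q ^ 2) ^ i) = (α⁻¹) ^ q := by
      rw [← hg, ← hi]
      simp only [AlgEquiv.coe_pow, FiniteField.coe_frobeniusAlgEquivOfAlgebraic_iterate, hF]
    have h1 : α ^ ((q ^ 2) ^ i + q) = 1 := by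
      rw [pow_add, hi2, ← mul_pow, inv_mul_cancel₀ h, one_pow]
    rcases i with _ | i
    · exact ⟨1, odd_one, by rw [← h1]; congr 1; ring⟩
    · refine ⟨2 * i + 1, ⟨i, rfl⟩, ?_⟩
      apply τ.injective
      rw [hτ, map_one, ← h1, ← pow_mul]
      congr 1; ring
  · rintro ⟨k, ⟨j, rfl⟩, hk⟩
    have : (α⁻¹) ^ q = (FiniteField.frobeniusAlgEquivOfAlgebraic F K ^ (j + 1)) α := by
      have : (FiniteField.frobeniusAlgEquivOfAlgebraic F K ^ (j + 1)) α = α ^ ((q ^ 2) ^ (j + 1)) := by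
        simp only [AlgEquiv.coe_pow, FiniteField.coe_frobeniusAlgEquivOfAlgebraic_iterate, hF]
      rw [this, inv_pow]
      symm
      apply eq_inv_of_mul_eq_one_left
      have e1 : (q ^ 2) ^ (j + 1) + q = (q ^ (2 * j + 1) + 1) * q := by ring
      rw [← pow_add, e1, pow_mul, hk, one_pow]
    rw [this, ← minpoly.algEquiv_eq (FiniteField.frobeniusAlgEquivOfAlgebraic F K ^ (j + 1)) α]
    exact minpoly.aeval F _

lemma scrimFactors_eq {F K : Type*} [Field F] [Fintype F] [Field K] [Finite K] [Algebra F K]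
    {q n N : ℕ} (hF : Fintype.card F = q ^ 2) (σ : F →+* F)
    (hσ : ∀ a, σ a = a ^ q) (τ : K →+* K) (hτ : ∀ a, τ a = a ^ q)
    (hn : 0 < n) (hN : N ∣ n) (hs : ((X ^ n - 1 : F[X]).map (algebraMap F K)).Splits) :
    scrimFactors F q N = minpoly F '' {α : K | α ^ N = 1 ∧ ScGood q α} := by
  have hN0 : N ≠ 0 := (Nat.pos_of_dvd_of_pos hN hn).ne'
  have ne0 : ∀ α : K, α ^ N = 1 → α ≠ 0 := by
    rintro α h rfl
    rw [zero_pow hN0] at h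
    exact zero_ne_one h
  ext f
  constructor
  · rintro ⟨hf, hd⟩
    have hd2 : f ∣ X ^ n - 1 := hd.trans (by
      obtain ⟨c, rfl⟩ := hN
      rw [pow_mul]
      simpa using sub_dvd_pow_sub_pow ((X : F[X]) ^ N) 1 c)
    have hne : (X ^ n - 1 : F[X]) ≠ 0 := by simpa using X_pow_sub_C_ne_zero hn (1 : F)
    have hsp : (f.map (algebraMap F K)).Splits :=
      hs.of_dvd (Polynomial.map_ne_zero hne)
        (Polynomial.map_dvd _ hd2)
    obtain ⟨α, hα⟩ := hsp.exists_eval_eq_zero (by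
      rw [degree_map]; exact hf.2.1.degree_pos.ne')
    have hα' : aeval α f = 0 := by rwa [aeval_def, ← eval_map]
    have e : f = minpoly F α := minpoly.eq_of_irreducible_of_monic hf.2.1 hα' hf.1
    have h1 : α ^ N = 1 := by
      obtain ⟨g, hg⟩ := hd
      have := congrArg (aeval α) hg
      rw [map_mul, hα', zero_mul] at this
      simpa [sub_eq_zero] using this
    refine ⟨α, ⟨h1, ?_⟩, e.symm⟩
    rw [e] at hf
    exact (scrim_minpoly_iff hF σ hσ τ hτ α (ne0 α h1)).1 hf
  · rintro ⟨α, ⟨h1, h2⟩, rfl⟩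
    refine ⟨(scrim_minpoly_iff hF σ hσ τ hτ α (ne0 α h1)).2 h2, minpoly.dvd F α ?_⟩
    simp [h1]

lemma two_pow_dvd_of_odd {q k a : ℕ} (hq : Odd q) (hk : Odd k) (h : 2 ^ a ∣ q ^ k + 1) :
    2 ^ a ∣ q + 1 := by
  have hz : emultiplicity (2 : ℤ) ((q : ℤ) ^ k - (-1) ^ k) = emultiplicity (2 : ℤ) ((q : ℤ) - (-1)) := by
    apply emultiplicity_pow_sub_pow_of_prime Int.prime_two
    · have : (Odd (q : ℤ)) := by exact_mod_cast hq
      obtain ⟨c, hc⟩ := this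
      exact ⟨c + 1, by rw [hc]; ring⟩
    · have : (Odd (q : ℤ)) := by exact_mod_cast hq
      intro h; exact (Int.not_even_iff_odd.2 this) (even_iff_two_dvd.2 h)
    · intro h
      have h : 2 ∣ k := by exact_mod_cast h
      exact (Nat.not_even_iff_odd.2 hk) (even_iff_two_dvd.2 h)
  rw [hk.neg_one_pow] at hz
  have h' : (2 : ℤ) ^ a ∣ (q : ℤ) ^ k - (-1) := by
    rw [sub_neg_eq_add]; exact_mod_cast h
  rw [pow_dvd_iff_le_emultiplicity, hz, ← pow_dvd_iff_le_emultiplicity, sub_neg_eq_add] at h'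
  exact_mod_cast h'

lemma main_count {F K : Type*} [Field F] [Fintype F] [Field K] [Finite K] [Algebra F K]
    {q m n' r : ℕ} (hF : Fintype.card F = q ^ 2) (hqodd : Odd q) (σ : F →+* F)
    (hσ : ∀ a, σ a = a ^ q) (τ : K →+* K) (hτ : ∀ a, τ a = a ^ q)
    (hn' : Odd n') (hr1 : 2 ^ r ∣ q + 1) (hr2 : ¬ 2 ^ (r + 1) ∣ q + 1)
    (hs : ((X ^ (2 ^ m * n') - 1 : F[X]).map (algebraMap F K)).Splits) :
    (scrimFactors F q (2 ^ m * n')).ncard = 2 ^ (min m r) * (scrimFactors F q n').ncard := by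
  have hn : 0 < 2 ^ m * n' := Nat.mul_pos (by positivity) hn'.pos
  rw [scrimFactors_eq (K := K) hF σ hσ τ hτ hn dvd_rfl hs,
    scrimFactors_eq (K := K) hF σ hσ τ hτ hn (Dvd.intro_left _ rfl) hs]
  set s := min m r with hsdef
  have hsq : 2 ^ s ∣ q + 1 := (pow_dvd_pow 2 (min_le_right m r)).trans hr1
  have hsm : 2 ^ s ∣ 2 ^ m := pow_dvd_pow 2 (min_le_left m r)
  -- primitive root in F
  obtain ⟨ζ, hζ⟩ : ∃ ζ : F, IsPrimitiveRoot ζ (2 ^ s) := by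
    obtain ⟨g, hg⟩ := IsCyclic.exists_ofOrder_eq_natCard (α := Fˣ)
    have hc : Nat.card Fˣ = q ^ 2 - 1 := by
      rw [Nat.card_units, Nat.card_eq_fintype_card, hF]
    have hd : 2 ^ s ∣ q ^ 2 - 1 := by
      have : q ^ 2 - 1 = (q + 1) * (q - 1) := by
        simpa using Nat.sq_sub_sq q 1
      rw [this]; exact hsq.mul_right _
    obtain ⟨c, hc2⟩ := hd
    have hp : 0 < q ^ 2 - 1 := by
      rw [← hc]; exact Nat.card_pos
    have := (IsPrimitiveRoot.orderOf g).pow (n := orderOf g) (a := c) (b := 2 ^ s)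
      (by rw [hg, hc]; exact hp) (by rw [hg, hc, hc2, mul_comm])
    exact ⟨_, this.map_of_injective (f := Units.coeHom F) Units.val_injective⟩
  set S : Set F := {c | c ^ (2 ^ s) = 1} with hS
  have hScard : S.ncard = 2 ^ s := by
    have : S = (nthRootsFinset (2 ^ s) (1 : F) : Set F) := by
      ext c; simp [hS, mem_nthRootsFinset]
    rw [this, Set.ncard_coe_finset, hζ.card_nthRootsFinset]
  have hζK : IsPrimitiveRoot (algebraMap F K ζ) (2 ^ s) :=
    hζ.map_of_injective (algebraMap F K).injective
  have hS0 : ∀ c ∈ S, c ≠ 0 := by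
    rintro c hc rfl
    simp [hS] at hc
  have hcop : Nat.Coprime (2 ^ m) n' := (Nat.coprime_two_left.2 hn').pow_left m
  have hcops : Nat.Coprime (2 ^ s) n' := (Nat.coprime_two_left.2 hn').pow_left s
  rw [← hScard, ← Set.ncard_prod]
  symm
  refine Set.ncard_congr (fun p _ => p.2.scaleRoots p.1) ?_ ?_ ?_
  · rintro ⟨c, f⟩ ⟨hc, α, ⟨h1, k, hk, h2⟩, rfl⟩
    have hc' : c ^ (2 ^ s) = 1 := hc
    refine ⟨c • α, ⟨?_, k, hk, ?_⟩, ?_⟩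
    · obtain ⟨t, ht⟩ := hsm
      rw [_root_.smul_pow, ht, mul_assoc, pow_mul c, hc', one_pow, one_smul, ← mul_assoc, ← ht, mul_comm,
        pow_mul, h1, one_pow]
    · obtain ⟨t, ht⟩ : 2 ^ s ∣ q ^ k + 1 :=
        hsq.trans (by simpa using Odd.nat_add_dvd_pow_add_pow q 1 hk)
      rw [_root_.smul_pow, h2, ht, pow_mul, hc', one_pow, one_smul]
    · exact IsIntegrallyClosed.minpoly_smul (hS0 c hc) (Algebra.IsIntegral.isIntegral α)
  · rintro ⟨c, f⟩ ⟨c', f'⟩ ⟨hc, α, ⟨h1, -⟩, rfl⟩ ⟨hc', α', ⟨h1', -⟩, rfl⟩ he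
    have hcc : c ^ (2 ^ s) = 1 := hc
    have hcc' : c' ^ (2 ^ s) = 1 := hc'
    dsimp only at he
    rw [← IsIntegrallyClosed.minpoly_smul (hS0 c hc) (Algebra.IsIntegral.isIntegral α), ← IsIntegrallyClosed.minpoly_smul (hS0 c' hc') (Algebra.IsIntegral.isIntegral α')] at he
    obtain ⟨g, hg⟩ := (Normal.minpoly_eq_iff_mem_orbit K).1 he
    have hg : g (c' • α') = c • α := hg
    rw [map_smul] at hg
    have hga : (g α') ^ n' = 1 := by rw [← map_pow, h1', map_one]
    have h3 : c' ^ n' = c ^ n' := by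
      have := congrArg (· ^ n') hg
      simp only [_root_.smul_pow, hga, h1] at this
      rw [← Algebra.algebraMap_eq_smul_one, ← Algebra.algebraMap_eq_smul_one] at this
      exact (algebraMap F K).injective this
    have h4 : c' / c = 1 := by
      have a1 : (c' / c) ^ n' = 1 := by
        rw [div_pow, h3, div_self (pow_ne_zero _ (hS0 c hc))]
      have a2 : (c' / c) ^ (2 ^ s) = 1 := by rw [div_pow, hcc, hcc', div_one]
      exact (pow_eq_one_iff_of_coprime hcops).1 ⟨a2, a1⟩
    have h5 : c' = c := (div_eq_one_iff_eq (hS0 c hc)).1 h4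
    subst h5
    have h6 : g α' = α := smul_right_injective K (hS0 c' hc) hg
    rw [← h6, minpoly.algEquiv_eq]
  · rintro f ⟨α, ⟨h1, k, hk, h2⟩, rfl⟩
    have hα0 : α ≠ 0 := by
      rintro rfl
      rw [zero_pow (by positivity)] at h2
      exact zero_ne_one h2
    have hb := Nat.gcd_eq_gcd_ab (2 ^ m) n'
    rw [hcop] at hb
    set v := Nat.gcdA (2 ^ m) n'
    set u := Nat.gcdB (2 ^ m) n'
    set β := α ^ ((2 ^ m : ℕ) * v : ℤ) with hβ
    set γ := α ^ ((n' : ℕ) * u : ℤ) with hγ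
    have hprod : γ * β = α := by
      rw [hβ, hγ, ← zpow_add₀ hα0, add_comm, ← hb]; simp
    have hz1 : α ^ ((2 ^ m * n' : ℕ) : ℤ) = 1 := by rw [zpow_natCast, h1]
    have hz2 : α ^ ((q ^ k + 1 : ℕ) : ℤ) = 1 := by rw [zpow_natCast, h2]
    have hβ1 : β ^ n' = 1 := by
      rw [← zpow_natCast, hβ, ← zpow_mul,
        show ((2 ^ m : ℕ) * v * (n' : ℕ) : ℤ) = ((2 ^ m * n' : ℕ) : ℤ) * v by push_cast; ring,
        zpow_mul, hz1, one_zpow]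
    have hβ2 : β ^ (q ^ k + 1) = 1 := by
      rw [← zpow_natCast, hβ, ← zpow_mul, mul_comm, zpow_mul, hz2, one_zpow]
    have hγ1 : γ ^ (2 ^ m) = 1 := by
      rw [← zpow_natCast, hγ, ← zpow_mul,
        show ((n' : ℕ) * u * (2 ^ m : ℕ) : ℤ) = ((2 ^ m * n' : ℕ) : ℤ) * u by push_cast; ring,
        zpow_mul, hz1, one_zpow]
    have hγ2 : γ ^ (q ^ k + 1) = 1 := by
      rw [← zpow_natCast, hγ, ← zpow_mul, mul_comm, zpow_mul, hz2, one_zpow]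
    have hγs : γ ^ (2 ^ s) = 1 := by
      obtain ⟨a, ham, ha⟩ := (Nat.dvd_prime_pow Nat.prime_two).1 (orderOf_dvd_of_pow_eq_one hγ1)
      have hd := orderOf_dvd_of_pow_eq_one hγ2
      rw [ha] at hd
      have hd2 := two_pow_dvd_of_odd hqodd hk hd
      have har : a ≤ r := by
        by_contra hlt
        exact hr2 ((pow_dvd_pow 2 (by omega)).trans hd2)
      rw [← orderOf_dvd_iff_pow_eq_one, ha]
      exact pow_dvd_pow 2 (le_min ham har)
    obtain ⟨i, -, hi⟩ := hζK.eq_pow_of_pow_eq_one hγs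
    have hmem : ζ ^ i ∈ S := by
      change (ζ ^ i) ^ (2 ^ s) = 1
      rw [← pow_mul, mul_comm, pow_mul, hζ.pow_eq_one, one_pow]
    refine ⟨(ζ ^ i, minpoly F β), ⟨hmem, β, ⟨hβ1, k, hk, hβ2⟩, rfl⟩, ?_⟩
    dsimp only
    rw [← IsIntegrallyClosed.minpoly_smul (hS0 _ hmem) (Algebra.IsIntegral.isIntegral β), Algebra.smul_def, map_pow, hi, hprod]

theorem stmt6 {q m n' r : ℕ} (hq : IsPrimePow q) (hqodd : Odd q)
    {F : Type*} [Field F] [Fintype F] (hF : Fintype.card F = q ^ 2)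
    (hn' : Odd n') (hgcd : Nat.Coprime (2 ^ m * n') q)
    (hr : 0 < r) (hr1 : 2 ^ r ∣ q + 1) (hr2 : ¬ 2 ^ (r + 1) ∣ q + 1) :
    (m ≤ r →
      (scrimFactors F q (2 ^ m * n')).ncard = 2 ^ m * (scrimFactors F q n').ncard) ∧
    (r < m →
      (scrimFactors F q (2 ^ m * n')).ncard = 2 ^ r * (scrimFactors F q n').ncard) ∧
    (n' = 1 → (scrimFactors F q n').ncard = 1) := by
  have hn : 0 < 2 ^ m * n' := Nat.mul_pos (by positivity) hn'.pos
  have hs := SplittingField.splits (X ^ (2 ^ m * n') - 1 : F[X])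
  set K := SplittingField (X ^ (2 ^ m * n') - 1 : F[X])
  have : Finite K := Module.finite_of_finite F
  obtain ⟨p, e, hp, he, hpe⟩ := (isPrimePow_nat_iff q).1 hq
  have : Fact p.Prime := ⟨hp⟩
  have : CharP F p := by
    obtain ⟨p', hp'⟩ := CharP.exists F
    obtain ⟨n, hp'2, hcard⟩ := FiniteField.card F p'
    have : p ∣ p' ^ (n : ℕ) := by
      rw [← hcard, hF, ← hpe, ← pow_mul]
      exact dvd_pow_self p (by positivity)
    have := (Nat.prime_dvd_prime_iff_eq hp hp'2).1 (hp.dvd_of_dvd_pow this)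
    rwa [this]
  have : CharP K p := charP_of_injective_algebraMap (algebraMap F K).injective p
  have hσ : ∀ a, iterateFrobenius F p e a = a ^ q := by
    intro a; rw [iterateFrobenius_def, hpe]
  have hτ : ∀ a, iterateFrobenius K p e a = a ^ q := by
    intro a; rw [iterateFrobenius_def, hpe]
  have main := main_count hF hqodd _ hσ _ hτ hn' hr1 hr2 hs
  refine ⟨fun h => ?_, fun h => ?_, ?_⟩
  · rwa [min_eq_left h] at main
  · rwa [min_eq_right h.le] at main
  · rintro h
    rw [scrimFactors_eq (K := K) hF _ hσ _ hτ hn (Dvd.intro_left _ rfl) hs, Set.ncard_eq_one]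
    refine ⟨minpoly F (1 : K), ?_⟩
    have : {α : K | α ^ n' = 1 ∧ ScGood q α} = {1} := by
      ext α
      constructor
      · rintro ⟨h3, -⟩; simpa [h] using h3
      · rintro rfl; exact ⟨one_pow _, 1, odd_one, one_pow _⟩
    rw [this, Set.image_singleton]
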